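/- Let 𝒜 be an S-ring over a finite abelian group G which is the S-wreath product for some 𝒜-section S = U/L. Suppose that 𝒜_U and 𝒜_{G/L} are separable with respect to 𝒦_A, that 𝒜_U is schurian, and that the permutation group Aut(𝒜_S) ≤ Sym(S) is 2-isolated. Then 𝒜 is separable with respect to 𝒦_A. -/

import Mathlib

/-!
Let `φ` be an algebraic isomorphism from `A` to an S-ring `B` over a finite abelian group `H`.
Extended to unions of basic sets, `φ` still preserves structure constants
(`IsAlgIso.structConst_ext`). So it preserves cardinalities, maps the `A`-subgroups `U` and `L` to
`B`-subgroups `U'` and `L'`, and induces algebraic isomorphisms of the restrictions to `U`, `U'`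
(`IsAlgIso.restr`) and of the quotients by `L`, `L'` (`IsAlgIso.quot`; structure constants of
the quotient are those of unions of `L`-cosets divided by `|L|`). By separability these are induced
by bijections `fU : U → U'` and `fQ : G/L → H/L'`.

Since `A_U` is schurian, the group `Aut(A_U)^S` has the same orbits on pairs as `Aut(A_S)`, hence by
2-isolation the two groups coincide: every automorphism of `A_S` lifts to `A_U` (`exists_lift`). On
a coset `U g`, the suitably translated `fQ` and `fU` induce the same algebraic isomorphism of
`A_S`, so they differ on `S` by an automorphism of `A_S`. Correcting `fU` by a lift of that
automorphism gives a bijection `U → U'` which induces `φ` on `U` and covers the translated `fQ`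
(`IsAlgIso.exists_local`). Gluing these over the cosets of `U` yields `f : G → H` covering `fQ`.
Basic sets inside `U` are respected because each local map respects them. Basic sets outside `U`
are respected because they, and their images under `φ`, are unions of cosets of `L` and `L'`, so that
they are governed by `fQ` alone.

The universes of the target groups in the separability hypotheses and in the conclusion may differ;
`SepAbelian.transfer` removes this discrepancy.
-/

open scoped Pointwise

namespace SRingPaper

/-- The number of representations of `z` as `x * y` with `x ∈ X`, `y ∈ Y`
(the structure constant `c^Z_{X,Y}` evaluated at `z ∈ Z`). -/
noncomputable def structConst {G : Type*} [Group G] (X Y : Set G) (z : G) : ℕ :=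
  Nat.card {p : G × G // p.1 ∈ X ∧ p.2 ∈ Y ∧ p.1 * p.2 = z}

/-- An S-ring (Schur ring) over a finite group `G`, given by its partition of `G`
into basic sets: the partition contains `{1}`, is closed under taking inverses,
and the structure constants are constant on each class (equivalently, the
ℤ-span of the indicator elements of the classes is a subring of ℤG). -/
structure SRing (G : Type*) [Group G] [Finite G] where
  parts : Set (Set G)
  nonempty_mem : ∀ X ∈ parts, X.Nonempty
  exists_mem : ∀ g : G, ∃ X ∈ parts, g ∈ X
  eq_of_mem : ∀ X ∈ parts, ∀ Y ∈ parts, ∀ g : G, g ∈ X → g ∈ Y → X = Y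
  one_mem : ({1} : Set G) ∈ parts
  inv_mem : ∀ X ∈ parts, X⁻¹ ∈ parts
  structConst_const : ∀ X ∈ parts, ∀ Y ∈ parts, ∀ Z ∈ parts, ∀ z ∈ Z, ∀ z' ∈ Z,
    structConst X Y z = structConst X Y z'

/-- `R(X) = {(g, x*g) : x ∈ X, g ∈ G}`, the edge set of the Cayley graph `Cay(G,X)`. -/
def RSet {G : Type*} [Group G] (X : Set G) : Set (G × G) :=
  {p | ∃ x ∈ X, p.2 = x * p.1}

/-- The image of a binary relation under a map applied to both coordinates. -/
def mapRel {G G' : Type*} (f : G → G') (R : Set (G × G)) : Set (G' × G') :=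
  (fun p : G × G => (f p.1, f p.2)) '' R

section Defs

variable {G G' : Type*} [Group G] [Finite G] [Group G'] [Finite G']

/-- A combinatorial isomorphism from the S-ring `A` to the S-ring `B`. -/
structure IsIso (A : SRing G) (B : SRing G') (f : G → G') : Prop where
  bijective : Function.Bijective f
  image_eq : (fun X : Set G => mapRel f (RSet X)) '' A.parts = RSet '' B.parts

/-- An algebraic isomorphism from the S-ring `A` to the S-ring `B`:
a bijection between the basic sets preserving all structure constants. -/
structure IsAlgIso (A : SRing G) (B : SRing G') (φ : Set G → Set G') : Prop where
  bijOn : Set.BijOn φ A.parts B.parts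
  structConst_eq : ∀ X ∈ A.parts, ∀ Y ∈ A.parts, ∀ Z ∈ A.parts,
    ∀ z ∈ Z, ∀ z' ∈ φ Z, structConst X Y z = structConst (φ X) (φ Y) z'

/-- The algebraic isomorphism `φ` is induced by the combinatorial isomorphism `f`
(i.e. `φ = φ_f`). -/
def InducedBy (A : SRing G) (φ : Set G → Set G') (f : G → G') : Prop :=
  Function.Bijective f ∧ ∀ X ∈ A.parts, mapRel f (RSet X) = RSet (φ X)

/-- `A` is separable with respect to the class `𝒦_A` of finite abelian groups. -/
def SepAbelian (A : SRing G) : Prop :=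
  ∀ (H : Type*) [CommGroup H] [Finite H] (B : SRing H) (φ : Set G → Set H),
    IsAlgIso A B φ → ∃ f : G → H, InducedBy A φ f

/-- `A` is separable with respect to the class `𝒦_C` of finite cyclic groups. -/
def SepCyclic (A : SRing G) : Prop :=
  ∀ (H : Type*) [Group H] [Finite H], IsCyclic H → ∀ (B : SRing H) (φ : Set G → Set H),
    IsAlgIso A B φ → ∃ f : G → H, InducedBy A φ f

/-- `A` is schurian: `A = V(K, G)` for some group `K` with `G_right ≤ K ≤ Sym(G)`,
i.e. the basic sets of `A` are the orbits on `G` of the stabilizer of `1` in `K`. -/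
def IsSchurian (A : SRing G) : Prop :=
  ∃ K : Subgroup (Equiv.Perm G),
    (∀ g : G, Equiv.mulRight g ∈ K) ∧
    A.parts = {X : Set G | ∃ g : G, X = {h : G | ∃ f ∈ K, f 1 = 1 ∧ f g = h}}

lemma mapRel_comp {A B C : Type*} (f : B → C) (g : A → B) (R : Set (A × A)) :
    mapRel (f ∘ g) R = mapRel f (mapRel g R) := by
  simp only [mapRel, Set.image_image]
  rfl

lemma mapRel_id {A : Type*} (R : Set (A × A)) : mapRel (fun x => x) R = R := by
  simp [mapRel]

/-- The automorphism group `Aut(A)` of an S-ring, as a subgroup of `Sym(G)`. -/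
def autSubgroup (A : SRing G) : Subgroup (Equiv.Perm G) where
  carrier := {f : Equiv.Perm G | ∀ X ∈ A.parts, mapRel f (RSet X) = RSet X}
  one_mem' := by
    intro X hX
    have h : ⇑(1 : Equiv.Perm G) = fun x => x := rfl
    rw [h, mapRel_id]
  mul_mem' := by
    intro f g hf hg X hX
    have h : ⇑(f * g) = ⇑f ∘ ⇑g := rfl
    rw [h, mapRel_comp, hg X hX, hf X hX]
  inv_mem' := by
    intro f hf X hX
    conv_lhs => rw [← hf X hX]
    rw [← mapRel_comp]
    have h : ⇑f⁻¹ ∘ ⇑f = fun x => x := by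
      funext x
      simp
    rw [h, mapRel_id]

/-- `A` is a normal S-ring: `G_right` is normal in `Aut(A)`. -/
def IsNormalSRing (A : SRing G) : Prop :=
  ∀ f ∈ autSubgroup A, ∀ g : G,
    ∃ g' : G, f * (Equiv.mulRight g : Equiv.Perm G) * f⁻¹ = Equiv.mulRight g'

/-- The partition of `G` into the orbits of `K ≤ Aut(G)`: the basic sets of the
cyclotomic S-ring `cyc(K, G)`. -/
def cycParts (K : Subgroup (MulAut G)) : Set (Set G) :=
  {X : Set G | ∃ g : G, X = {h : G | ∃ f ∈ K, f g = h}}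

/-- `H` is an `A`-subgroup: `H` is a union of basic sets of `A`. -/
def IsASubgroup (A : SRing G) (H : Subgroup G) : Prop :=
  ∀ X ∈ A.parts, X ⊆ (H : Set G) ∨ Disjoint X (H : Set G)

/-- `rad(X) = {g ∈ G : gX = Xg = X}`. -/
def radSet (X : Set G) : Set G :=
  {g : G | (fun x => g * x) '' X = X ∧ (fun x => x * g) '' X = X}

/-- A subset of a cyclic group is highest if it contains a generator. -/
def IsHighest (X : Set G) : Prop :=
  ∃ x ∈ X, ∀ g : G, g ∈ Subgroup.zpowers x

/-- `A` is the `S`-wreath product with respect to the section `S = U/L`: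
`U` and `L` are `A`-subgroups, `L ≤ U`, `L` is normal in `G`, and every basic
set outside `U` has `L` in its radical. -/
def IsSWreath (A : SRing G) (U L : Subgroup G) : Prop :=
  IsASubgroup A U ∧ IsASubgroup A L ∧ L ≤ U ∧ L.Normal ∧
    ∀ X ∈ A.parts, ¬ X ⊆ (U : Set G) → (L : Set G) ⊆ radSet X

/-- `AU` is the restriction `A_U` of `A` to the `A`-subgroup `U`. -/
def IsRestriction (A : SRing G) (U : Subgroup G) (AU : SRing ↥U) : Prop :=
  AU.parts = {Y : Set ↥U | ∃ X ∈ A.parts, X ⊆ (U : Set G) ∧ Y = (Subtype.val ⁻¹' X : Set ↥U)}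

/-- `AQ` is the quotient S-ring `A_{G/L}`. -/
def IsQuotientSRing (A : SRing G) (L : Subgroup G) [L.Normal] (AQ : SRing (G ⧸ L)) : Prop :=
  AQ.parts = {Y : Set (G ⧸ L) | ∃ X ∈ A.parts, Y = ((QuotientGroup.mk : G → G ⧸ L) '' X)}

/-- The orbit of a pair under a permutation group, for the definition of 2-equivalence. -/
def orb2 {Ω : Type*} (K : Subgroup (Equiv.Perm Ω)) (p : Ω × Ω) : Set (Ω × Ω) :=
  {q : Ω × Ω | ∃ f ∈ K, (f p.1, f p.2) = q}

/-- Two permutation groups are 2-equivalent if they have the same orbits on `Ω × Ω`. -/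
def TwoEquiv {Ω : Type*} (K K' : Subgroup (Equiv.Perm Ω)) : Prop :=
  {S : Set (Ω × Ω) | ∃ p, S = orb2 K p} = {S : Set (Ω × Ω) | ∃ p, S = orb2 K' p}

/-- A permutation group is 2-isolated if it is the only group 2-equivalent to it. -/
def TwoIsolated {Ω : Type*} (K : Subgroup (Equiv.Perm Ω)) : Prop :=
  ∀ K' : Subgroup (Equiv.Perm Ω), TwoEquiv K K' → K' = K

end Defs

/-- `Aut(A)^S` for the section `S = G/N`: the permutations of `G/N` induced by
automorphisms of `A` permuting the `N`-cosets. -/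
def inducedOnQuotient {G : Type*} [Group G] [Finite G] (A : SRing G) (N : Subgroup G)
    [N.Normal] : Set ((G ⧸ N) → (G ⧸ N)) :=
  {q : (G ⧸ N) → (G ⧸ N) | ∃ f : Equiv.Perm G, f ∈ autSubgroup A ∧
    (∀ u v : G, (u : G ⧸ N) = (v : G ⧸ N) → ((f u : G) : G ⧸ N) = ((f v : G) : G ⧸ N)) ∧
    ∀ u : G, q (u : G ⧸ N) = ((f u : G) : G ⧸ N)}

end SRingPaper


namespace SRingPaper

/-! ### Unions of basic sets and algebraic isomorphisms -/

section Basic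

variable {G H : Type*} [CommGroup G] [Finite G] [CommGroup H] [Finite H]

/-- `P` is an `A`-set, i.e. a union of basic sets of `A`. -/
def IsASet (A : SRing G) (P : Set G) : Prop :=
  ∀ X ∈ A.parts, X ⊆ P ∨ Disjoint X P

/-- The extension of a map `φ` between basic sets to unions of basic sets. -/
def extSet (A : SRing G) (φ : Set G → Set H) (P : Set G) : Set H :=
  {h | ∃ X ∈ A.parts, X ⊆ P ∧ h ∈ φ X}

/-- A two-parameter decomposition of structure constants along disjoint unions. -/
lemma structConst_eq_sum {ι κ : Type*} [Fintype ι] [Fintype κ] (X : ι → Set G) (Y : κ → Set G)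
    (P Q : Set G) (hP : ∀ g, g ∈ P ↔ ∃ i, g ∈ X i) (hQ : ∀ g, g ∈ Q ↔ ∃ i, g ∈ Y i)
    (hX : ∀ g i j, g ∈ X i → g ∈ X j → i = j) (hY : ∀ g i j, g ∈ Y i → g ∈ Y j → i = j) (z : G) :
    structConst P Q z = ∑ i : ι × κ, structConst (X i.1) (Y i.2) z := by
  unfold structConst
  rw [← Nat.card_sigma]
  refine (Nat.card_congr (Equiv.ofBijective (fun s => ⟨s.2.1, (hP _).2 ⟨_, s.2.2.1⟩,
    (hQ _).2 ⟨_, s.2.2.2.1⟩, s.2.2.2.2⟩) ⟨?_, ?_⟩)).symm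
  · rintro ⟨⟨i, k⟩, ⟨p, hp⟩⟩ ⟨⟨i', k'⟩, ⟨p', hp'⟩⟩ h
    obtain rfl : p = p' := congrArg Subtype.val h
    obtain rfl := hX _ _ _ hp.1 hp'.1
    obtain rfl := hY _ _ _ hp.2.1 hp'.2.1
    rfl
  · rintro ⟨p, h1, h2, h3⟩
    obtain ⟨i, hi⟩ := (hP _).1 h1
    obtain ⟨k, hk⟩ := (hQ _).1 h2
    exact ⟨⟨⟨i, k⟩, ⟨p, hi, hk, h3⟩⟩, rfl⟩

lemma structConst_eq_card (X Y : Set G) (z : G) :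
    structConst X Y z = Nat.card {x : G // x ∈ X ∧ x⁻¹ * z ∈ Y} := by
  refine Nat.card_congr ⟨fun p => ⟨p.1.1, p.2.1, ?_⟩, fun x => ⟨(x.1, x.1⁻¹ * z), x.2.1, x.2.2, ?_⟩,
    ?_, ?_⟩
  · have h : p.1.1⁻¹ * z = p.1.2 := inv_mul_eq_of_eq_mul p.2.2.2.symm
    rw [h]
    exact p.2.2.1
  · simp
  · rintro ⟨⟨a, b⟩, h1, h2, rfl⟩
    simp
  · rintro ⟨x, hx⟩
    rfl

lemma structConst_ne_zero {X Y : Set G} {z : G} :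
    structConst X Y z ≠ 0 ↔ ∃ x ∈ X, x⁻¹ * z ∈ Y := by
  rw [structConst_eq_card, Nat.card_ne_zero]
  constructor
  · rintro ⟨⟨x, h1, h2⟩, _⟩
    exact ⟨x, h1, h2⟩
  · rintro ⟨x, h1, h2⟩
    exact ⟨⟨x, h1, h2⟩, inferInstance⟩

lemma structConst_univ (X : Set G) (z : G) : structConst X Set.univ z = Nat.card X := by
  rw [structConst_eq_card]
  simp

lemma IsASet.subset {A : SRing G} {P X : Set G} (hP : IsASet A P) (hX : X ∈ A.parts) {g : G}
    (h : g ∈ X) (h' : g ∈ P) : X ⊆ P :=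
  (hP X hX).resolve_right fun hd => Set.disjoint_left.1 hd h h'

lemma isASet_part {A : SRing G} {X : Set G} (hX : X ∈ A.parts) : IsASet A X := by
  intro Y hY
  by_cases h : Disjoint Y X
  · exact Or.inr h
  · obtain ⟨g, h1, h2⟩ := Set.not_disjoint_iff.1 h
    exact Or.inl (A.eq_of_mem Y hY X hX g h1 h2).subset

lemma isASet_univ (A : SRing G) : IsASet A Set.univ := fun _ _ => Or.inl (Set.subset_univ _)

/-- A permutation respecting the colours of all pairs is an automorphism. -/
lemma mem_autSubgroup {A : SRing G} {f : Equiv.Perm G}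
    (h : ∀ X ∈ A.parts, ∀ a b, b * a⁻¹ ∈ X → f b * (f a)⁻¹ ∈ X) : f ∈ autSubgroup A := by
  intro X hX
  ext ⟨a, b⟩
  constructor
  · rintro ⟨⟨c, d⟩, ⟨x, hx, hd⟩, h2⟩
    simp only [Prod.mk.injEq] at hd h2
    obtain ⟨rfl, rfl⟩ := h2
    exact ⟨f d * (f c)⁻¹, h X hX _ _ (by simpa [hd] using hx), by simp⟩
  · rintro ⟨x, hx, hd⟩
    simp only at hd
    subst hd
    obtain ⟨Y, hY, hm⟩ := A.exists_mem (f.symm (x * a) * (f.symm a)⁻¹)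
    have h1 := h Y hY _ _ hm
    simp only [Equiv.apply_symm_apply, mul_inv_cancel_right] at h1
    obtain rfl := A.eq_of_mem X hX Y hY x hx h1
    exact ⟨(f.symm a, f.symm (x * a)), ⟨_, hm, by simp⟩, by simp⟩

lemma InducedBy.mem {A : SRing G} {φ : Set G → Set H} {f : G → H} (h : InducedBy A φ f)
    {X : Set G} (hX : X ∈ A.parts) {a b : G} (hab : b * a⁻¹ ∈ X) : f b * (f a)⁻¹ ∈ φ X := by
  have h1 : (f a, f b) ∈ RSet (φ X) := by
    rw [← h.2 X hX]
    exact ⟨(a, b), ⟨_, hab, by simp⟩, rfl⟩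
  obtain ⟨x, hx, hb⟩ := h1
  simp only at hb
  simpa [hb] using hx

lemma mem_of_mem_autSubgroup {A : SRing G} {f : Equiv.Perm G} (h : f ∈ autSubgroup A)
    {X : Set G} (hX : X ∈ A.parts) {a b : G} (hab : b * a⁻¹ ∈ X) : f b * (f a)⁻¹ ∈ X :=
  InducedBy.mem (A := A) (φ := fun X => X) ⟨f.bijective, h⟩ hX hab

section AlgIso

variable {A : SRing G} {B : SRing H} {φ : Set G → Set H}

lemma IsAlgIso.eq_of_mem (hφ : IsAlgIso A B φ) {X Y : Set G} (hX : X ∈ A.parts) (hY : Y ∈ A.parts)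
    {h : H} (h1 : h ∈ φ X) (h2 : h ∈ φ Y) : X = Y :=
  hφ.bijOn.injOn hX hY (B.eq_of_mem _ (hφ.bijOn.mapsTo hX) _ (hφ.bijOn.mapsTo hY) h h1 h2)

lemma IsAlgIso.exists_mem (hφ : IsAlgIso A B φ) (h : H) : ∃ X ∈ A.parts, h ∈ φ X := by
  obtain ⟨Y, hY, hh⟩ := B.exists_mem h
  obtain ⟨X, hX, rfl⟩ := hφ.bijOn.surjOn hY
  exact ⟨X, hX, hh⟩

lemma IsAlgIso.nonempty (hφ : IsAlgIso A B φ) {X : Set G} (hX : X ∈ A.parts) : (φ X).Nonempty :=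
  B.nonempty_mem _ (hφ.bijOn.mapsTo hX)

/-- A bijection sending every pair of colour `X` to a pair of colour `φ X` induces `φ`. -/
lemma IsAlgIso.inducedBy (hφ : IsAlgIso A B φ) {f : G → H} (hf : Function.Bijective f)
    (h : ∀ X ∈ A.parts, ∀ a b, b * a⁻¹ ∈ X → f b * (f a)⁻¹ ∈ φ X) : InducedBy A φ f := by
  refine ⟨hf, fun X hX => ?_⟩
  ext ⟨a, b⟩
  constructor
  · rintro ⟨⟨c, d⟩, ⟨x, hx, hd⟩, h2⟩
    simp only [Prod.mk.injEq] at hd h2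
    obtain ⟨rfl, rfl⟩ := h2
    exact ⟨f d * (f c)⁻¹, h X hX _ _ (by simpa [hd] using hx), by simp⟩
  · rintro ⟨x, hx, hd⟩
    simp only at hd
    subst hd
    obtain ⟨c, rfl⟩ := hf.2 a
    obtain ⟨d, hd⟩ := hf.2 (x * f c)
    obtain ⟨Y, hY, hm⟩ := A.exists_mem (d * c⁻¹)
    have h1 := h Y hY _ _ hm
    rw [hd, mul_inv_cancel_right] at h1
    obtain rfl := hφ.eq_of_mem hX hY hx h1
    exact ⟨(c, d), ⟨_, hm, by simp⟩, by simp [hd]⟩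

lemma isAlgIso_id (A : SRing G) : IsAlgIso A A (fun X => X) :=
  ⟨Set.bijOn_id _, fun X hX Y hY Z hZ z hz z' hz' => A.structConst_const X hX Y hY Z hZ z hz z' hz'⟩

lemma IsAlgIso.mem_ext_iff (hφ : IsAlgIso A B φ) {P X : Set G} (hP : IsASet A P)
    (hX : X ∈ A.parts) {g : G} {h : H} (hg : g ∈ X) (hh : h ∈ φ X) :
    h ∈ extSet A φ P ↔ g ∈ P := by
  constructor
  · rintro ⟨Y, hY, hYP, hm⟩
    obtain rfl := hφ.eq_of_mem hX hY hh hm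
    exact hYP hg
  · intro h1
    exact ⟨X, hX, hP.subset hX hg h1, hh⟩

/-- An algebraic isomorphism preserves the structure constants of unions of basic sets. -/
lemma IsAlgIso.structConst_ext (hφ : IsAlgIso A B φ) {P Q Z : Set G} (hP : IsASet A P)
    (hQ : IsASet A Q) (hZ : Z ∈ A.parts) {z : G} {z' : H} (hz : z ∈ Z) (hz' : z' ∈ φ Z) :
    structConst P Q z = structConst (extSet A φ P) (extSet A φ Q) z' := by
  classical
  have := Fintype.ofFinite {X : Set G // X ∈ A.parts ∧ X ⊆ P}
  have := Fintype.ofFinite {X : Set G // X ∈ A.parts ∧ X ⊆ Q}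
  have key : ∀ P : Set G, IsASet A P → ∀ g, g ∈ P ↔
      ∃ i : {X : Set G // X ∈ A.parts ∧ X ⊆ P}, g ∈ i.1 := by
    intro P hP g
    constructor
    · intro hg
      obtain ⟨X, hX, hm⟩ := A.exists_mem g
      exact ⟨⟨X, hX, hP.subset hX hm hg⟩, hm⟩
    · rintro ⟨i, hi⟩
      exact i.2.2 hi
  have key' : ∀ P : Set G, ∀ h, h ∈ extSet A φ P ↔
      ∃ i : {X : Set G // X ∈ A.parts ∧ X ⊆ P}, h ∈ φ i.1 := by
    intro P h
    constructor
    · rintro ⟨X, hX, hXP, hm⟩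
      exact ⟨⟨X, hX, hXP⟩, hm⟩
    · rintro ⟨i, hi⟩
      exact ⟨i.1, i.2.1, i.2.2, hi⟩
  rw [structConst_eq_sum (fun i : {X : Set G // X ∈ A.parts ∧ X ⊆ P} => i.1)
      (fun i : {X : Set G // X ∈ A.parts ∧ X ⊆ Q} => i.1) P Q (key P hP) (key Q hQ)
      (fun g i j hi hj => Subtype.ext (A.eq_of_mem _ i.2.1 _ j.2.1 g hi hj))
      (fun g i j hi hj => Subtype.ext (A.eq_of_mem _ i.2.1 _ j.2.1 g hi hj)),
    structConst_eq_sum (fun i : {X : Set G // X ∈ A.parts ∧ X ⊆ P} => φ i.1)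
      (fun i : {X : Set G // X ∈ A.parts ∧ X ⊆ Q} => φ i.1) _ _ (key' P) (key' Q)
      (fun g i j hi hj => Subtype.ext (hφ.eq_of_mem i.2.1 j.2.1 hi hj))
      (fun g i j hi hj => Subtype.ext (hφ.eq_of_mem i.2.1 j.2.1 hi hj))]
  exact Finset.sum_congr rfl fun i _ =>
    hφ.structConst_eq _ i.1.2.1 _ i.2.2.1 Z hZ z hz z' hz'

lemma extSet_id {P : Set G} (hP : IsASet A P) : extSet A (fun X => X) P = P := by
  ext g
  constructor
  · rintro ⟨X, _, h, hg⟩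
    exact h hg
  · intro hg
    obtain ⟨X, hX, hm⟩ := A.exists_mem g
    exact ⟨X, hX, hP.subset hX hm hg, hm⟩

lemma structConst_congr {P Q Z : Set G} (hP : IsASet A P)
    (hQ : IsASet A Q) (hZ : Z ∈ A.parts) {z z' : G} (hz : z ∈ Z) (hz' : z' ∈ Z) :
    structConst P Q z = structConst P Q z' := by
  simpa only [extSet_id hP, extSet_id hQ] using
    (isAlgIso_id A).structConst_ext hP hQ hZ hz hz'

lemma IsAlgIso.isASet_ext (hφ : IsAlgIso A B φ) {P : Set G} : IsASet B (extSet A φ P) := by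
  intro Y hY
  obtain ⟨X, hX, rfl⟩ := hφ.bijOn.surjOn hY
  by_cases h : X ⊆ P
  · exact Or.inl fun y hy => ⟨X, hX, h, hy⟩
  · refine Or.inr (Set.disjoint_left.2 ?_)
    rintro y hy ⟨X', hX', h', hy'⟩
    obtain rfl := hφ.eq_of_mem hX hX' hy hy'
    exact h h'

lemma IsAlgIso.ext_univ (hφ : IsAlgIso A B φ) : extSet A φ Set.univ = Set.univ := by
  ext h
  obtain ⟨X, hX, hm⟩ := hφ.exists_mem h
  exact ⟨fun _ => trivial, fun _ => ⟨X, hX, Set.subset_univ _, hm⟩⟩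

lemma extSet_part {X : Set G} (hX : X ∈ A.parts) :
    extSet A φ X = φ X := by
  ext h
  constructor
  · rintro ⟨Y, hY, hYX, hm⟩
    obtain ⟨g, hg⟩ := A.nonempty_mem Y hY
    obtain rfl := A.eq_of_mem Y hY X hX g hg (hYX hg)
    exact hm
  · intro hm
    exact ⟨X, hX, subset_rfl, hm⟩

/-- Sizes are the structure constants against the whole group, hence are preserved. -/
lemma IsAlgIso.card_ext (hφ : IsAlgIso A B φ) {P : Set G} (hP : IsASet A P) :
    Nat.card (extSet A φ P) = Nat.card P := by
  obtain ⟨h, hh⟩ := hφ.nonempty A.one_mem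
  have := hφ.structConst_ext hP (isASet_univ A) A.one_mem rfl hh
  rw [hφ.ext_univ, structConst_univ, structConst_univ] at this
  exact this.symm

lemma IsAlgIso.card_eq (hφ : IsAlgIso A B φ) : Nat.card G = Nat.card H := by
  have := hφ.card_ext (isASet_univ A)
  rw [hφ.ext_univ] at this
  simpa using this.symm

lemma IsAlgIso.ext_mul_mem (hφ : IsAlgIso A B φ) {U : Subgroup G} (hU : IsASubgroup A U)
    {a b : H} (ha : a ∈ extSet A φ U) (hb : b ∈ extSet A φ U) : a * b ∈ extSet A φ U := by
  obtain ⟨Z, hZ, hm⟩ := hφ.exists_mem (a * b)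
  obtain ⟨z, hz⟩ := A.nonempty_mem Z hZ
  have h1 : structConst (extSet A φ U) (extSet A φ U) (a * b) ≠ 0 :=
    structConst_ne_zero.2 ⟨a, ha, by simpa using hb⟩
  rw [← hφ.structConst_ext hU hU hZ hz hm] at h1
  obtain ⟨x, hx, hx'⟩ := structConst_ne_zero.1 h1
  refine (hφ.mem_ext_iff hU hZ hz hm).2 ?_
  simpa using U.mul_mem hx hx'

lemma IsAlgIso.ext_pow_mem (hφ : IsAlgIso A B φ) {U : Subgroup G} (hU : IsASubgroup A U)
    {a : H} (ha : a ∈ extSet A φ U) (n : ℕ) : a ^ (n + 1) ∈ extSet A φ U := by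
  induction n with
  | zero => simpa using ha
  | succ n ih => rw [pow_succ]; exact hφ.ext_mul_mem hU ih ha

/-- The image of an `A`-subgroup under an algebraic isomorphism, as a subgroup. -/
def IsAlgIso.mapSubgroup (hφ : IsAlgIso A B φ) {U : Subgroup G} (hU : IsASubgroup A U) :
    Subgroup H where
  carrier := extSet A φ U
  mul_mem' := hφ.ext_mul_mem hU
  one_mem' := by
    obtain ⟨h, hh⟩ := hφ.nonempty A.one_mem
    have h1 : h ∈ extSet A φ U := (hφ.mem_ext_iff hU A.one_mem rfl hh).2 U.one_mem
    have h2 := hφ.ext_pow_mem hU h1 (orderOf h - 1)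
    rwa [Nat.sub_add_cancel (orderOf_pos h), pow_orderOf_eq_one] at h2
  inv_mem' := by
    intro h h1
    have h2 := hφ.ext_pow_mem hU h1 (orderOf h + (orderOf h - 1) - 1)
    have h3 := orderOf_pos h
    have h4 : h ^ (orderOf h + (orderOf h - 1) - 1 + 1) = h⁻¹ := by
      rw [eq_inv_iff_mul_eq_one, ← pow_succ,
        show orderOf h + (orderOf h - 1) - 1 + 1 + 1 = orderOf h * 2 by omega, pow_mul,
        pow_orderOf_eq_one, one_pow]
    rwa [h4] at h2

lemma IsAlgIso.mem_mapSubgroup (hφ : IsAlgIso A B φ) {U : Subgroup G} (hU : IsASubgroup A U)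
    {X : Set G} (hX : X ∈ A.parts) {g : G} {h : H} (hg : g ∈ X) (hh : h ∈ φ X) :
    h ∈ hφ.mapSubgroup hU ↔ g ∈ U :=
  hφ.mem_ext_iff hU hX hg hh

end AlgIso

end Basic

/-! ### Restrictions and quotients -/

section Sections

variable {G H : Type*} [CommGroup G] [Finite G] [CommGroup H] [Finite H]

lemma structConst_preimage_val (U : Subgroup G) {X Y : Set G} (hX : X ⊆ U) (hY : Y ⊆ U) (z : U) :
    structConst (Subtype.val ⁻¹' X : Set U) (Subtype.val ⁻¹' Y) z = structConst X Y (z : G) := by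
  refine Nat.card_congr ⟨fun p => ⟨(p.1.1, p.1.2), p.2.1, p.2.2.1, ?_⟩,
    fun p => ⟨(⟨p.1.1, hX p.2.1⟩, ⟨p.1.2, hY p.2.2.1⟩), p.2.1, p.2.2.1, ?_⟩, ?_, ?_⟩
  · exact congrArg Subtype.val p.2.2.2
  · exact Subtype.ext p.2.2.2
  · intro p
    rfl
  · intro p
    rfl

/-- The restriction of an S-ring to an `A`-subgroup. -/
def restr (A : SRing G) (U : Subgroup G) (hU : IsASubgroup A U) : SRing U where
  parts := {Y | ∃ X ∈ A.parts, X ⊆ (U : Set G) ∧ Y = (Subtype.val ⁻¹' X : Set ↥U)}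
  nonempty_mem := by
    rintro _ ⟨X, hX, hXU, rfl⟩
    obtain ⟨x, hx⟩ := A.nonempty_mem X hX
    exact ⟨⟨x, hXU hx⟩, hx⟩
  exists_mem := by
    intro g
    obtain ⟨X, hX, hm⟩ := A.exists_mem g
    exact ⟨_, ⟨X, hX, IsASet.subset hU hX hm g.2, rfl⟩, hm⟩
  eq_of_mem := by
    rintro _ ⟨X, hX, hXU, rfl⟩ _ ⟨Y, hY, hYU, rfl⟩ g h1 h2
    rw [A.eq_of_mem X hX Y hY g h1 h2]
  one_mem := by
    refine ⟨{1}, A.one_mem, by simp, ?_⟩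
    ext x
    simp
  inv_mem := by
    rintro _ ⟨X, hX, hXU, rfl⟩
    refine ⟨X⁻¹, A.inv_mem X hX, ?_, ?_⟩
    · intro x hx
      simpa using hXU hx
    · ext x
      simp
  structConst_const := by
    rintro _ ⟨X, hX, hXU, rfl⟩ _ ⟨Y, hY, hYU, rfl⟩ _ ⟨Z, hZ, hZU, rfl⟩ z hz z' hz'
    rw [structConst_preimage_val U hXU hYU, structConst_preimage_val U hXU hYU]
    exact A.structConst_const X hX Y hY Z hZ _ hz _ hz'

/-- The factor `|L|` appears because `z = x * y` leaves `x` free in its `L`-coset. -/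
lemma structConst_preimage_mk (L : Subgroup G) (P Q : Set (G ⧸ L)) (z : G) :
    structConst ((QuotientGroup.mk : G → G ⧸ L) ⁻¹' P) ((QuotientGroup.mk : G → G ⧸ L) ⁻¹' Q) z =
      Nat.card L * structConst P Q (z : G ⧸ L) := by
  rw [structConst_eq_card, structConst_eq_card, ← Nat.card_prod]
  exact Nat.card_congr
    (QuotientGroup.preimageMkEquivSubgroupProdSet L {x : G ⧸ L | x ∈ P ∧ x⁻¹ * (z : G ⧸ L) ∈ Q})

/-- The union of the `L`-cosets meeting `X`. -/
abbrev satSet (L : Subgroup G) (X : Set G) : Set G :=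
  (QuotientGroup.mk : G → G ⧸ L) ⁻¹' ((QuotientGroup.mk : G → G ⧸ L) '' X)

lemma mem_satSet {L : Subgroup G} {X : Set G} {z : G} : z ∈ satSet L X ↔ ∃ x ∈ X, x⁻¹ * z ∈ L := by
  simp [satSet, QuotientGroup.eq]

lemma mem_satSet_iff {L : Subgroup G} {X : Set G} {z : G} :
    z ∈ satSet L X ↔ structConst X L z ≠ 0 := by
  rw [mem_satSet, structConst_ne_zero]
  rfl

variable {A : SRing G} {B : SRing H} {φ : Set G → Set H}

lemma isASet_sat {L : Subgroup G} (hL : IsASubgroup A L) {X : Set G} (hX : X ∈ A.parts) :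
    IsASet A (satSet L X) := by
  intro Z hZ
  by_cases h : Disjoint Z (satSet L X)
  · exact Or.inr h
  · obtain ⟨z, h1, h2⟩ := Set.not_disjoint_iff.1 h
    refine Or.inl fun z' hz' => ?_
    rw [mem_satSet_iff] at h2 ⊢
    rwa [structConst_congr (isASet_part hX) hL hZ hz' h1]

/-- Images of basic sets in the quotient are equal or disjoint. -/
lemma image_mk_eq {L : Subgroup G} (hL : IsASubgroup A L) {X Y : Set G} (hX : X ∈ A.parts)
    (hY : Y ∈ A.parts) {g : G ⧸ L} (h1 : g ∈ (QuotientGroup.mk : G → G ⧸ L) '' X)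
    (h2 : g ∈ (QuotientGroup.mk : G → G ⧸ L) '' Y) :
    (QuotientGroup.mk : G → G ⧸ L) '' X = (QuotientGroup.mk : G → G ⧸ L) '' Y := by
  obtain ⟨x, hx, rfl⟩ := h1
  obtain ⟨y, hy, hxy⟩ := h2
  apply subset_antisymm
  · rw [Set.image_subset_iff]
    exact (isASet_sat hL hY).subset hX hx ⟨y, hy, hxy⟩
  · rw [Set.image_subset_iff]
    exact (isASet_sat hL hX).subset hY hy ⟨x, hx, hxy.symm⟩

/-- The quotient of an S-ring by an `A`-subgroup. -/
def quotSRing (A : SRing G) (L : Subgroup G) (hL : IsASubgroup A L) : SRing (G ⧸ L) where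
  parts := {Y | ∃ X ∈ A.parts, Y = ((QuotientGroup.mk : G → G ⧸ L) '' X)}
  nonempty_mem := by
    rintro _ ⟨X, hX, rfl⟩
    exact (A.nonempty_mem X hX).image _
  exists_mem := by
    intro g
    obtain ⟨g, rfl⟩ := QuotientGroup.mk_surjective g
    obtain ⟨X, hX, hm⟩ := A.exists_mem g
    exact ⟨_, ⟨X, hX, rfl⟩, g, hm, rfl⟩
  eq_of_mem := by
    rintro _ ⟨X, hX, rfl⟩ _ ⟨Y, hY, rfl⟩ g h1 h2
    exact image_mk_eq hL hX hY h1 h2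
  one_mem := ⟨{1}, A.one_mem, by simp⟩
  inv_mem := by
    rintro _ ⟨X, hX, rfl⟩
    refine ⟨X⁻¹, A.inv_mem X hX, ?_⟩
    exact (Set.image_inv (QuotientGroup.mk' L) X).symm
  structConst_const := by
    rintro _ ⟨X, hX, rfl⟩ _ ⟨Y, hY, rfl⟩ _ ⟨Z, hZ, rfl⟩ z hz z' hz'
    obtain ⟨z, hz, rfl⟩ := hz
    obtain ⟨z', hz', rfl⟩ := hz'
    have h := structConst_congr (isASet_sat hL hX) (isASet_sat hL hY) hZ hz hz'
    rw [structConst_preimage_mk, structConst_preimage_mk] at h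
    exact Nat.eq_of_mul_eq_mul_left Nat.card_pos h

lemma IsAlgIso.isASubgroup_map (hφ : IsAlgIso A B φ) {U : Subgroup G} (hU : IsASubgroup A U) :
    IsASubgroup B (hφ.mapSubgroup hU) := hφ.isASet_ext (P := (U : Set G))

lemma IsAlgIso.ext_sat (hφ : IsAlgIso A B φ) {L : Subgroup G} (hL : IsASubgroup A L) {X : Set G}
    (hX : X ∈ A.parts) : extSet A φ (satSet L X) = satSet (hφ.mapSubgroup hL) (φ X) := by
  ext h
  obtain ⟨Z, hZ, hm⟩ := hφ.exists_mem h
  obtain ⟨z, hz⟩ := A.nonempty_mem Z hZ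
  rw [hφ.mem_ext_iff (isASet_sat hL hX) hZ hz hm, mem_satSet_iff, mem_satSet_iff,
    hφ.structConst_ext (isASet_part hX) hL hZ hz hm, extSet_part hX]
  rfl

/-- The algebraic isomorphism induced on restrictions. -/
lemma IsAlgIso.restr (hφ : IsAlgIso A B φ) {U : Subgroup G} (hU : IsASubgroup A U)
    {AU : SRing U} (hAU : IsRestriction A U AU) :
    IsAlgIso AU (restr B (hφ.mapSubgroup hU) (hφ.isASubgroup_map hU))
      (fun Y => Subtype.val ⁻¹' φ (Subtype.val '' Y)) := by
  have himg : ∀ X : Set G, X ⊆ U → Subtype.val '' (Subtype.val ⁻¹' X : Set U) = X := by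
    intro X hX
    exact Set.image_preimage_eq_of_subset (by simpa using hX)
  have hsub : ∀ X ∈ A.parts, X ⊆ U → φ X ⊆ hφ.mapSubgroup hU :=
    fun X hX hXU h hh => ⟨X, hX, hXU, hh⟩
  refine ⟨⟨?_, ?_, ?_⟩, ?_⟩
  · rw [hAU]
    rintro _ ⟨X, hX, hXU, rfl⟩
    simp only [himg X hXU]
    exact ⟨φ X, hφ.bijOn.mapsTo hX, hsub X hX hXU, rfl⟩
  · rw [hAU]
    rintro _ ⟨X, hX, hXU, rfl⟩ _ ⟨Y, hY, hYU, rfl⟩ h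
    simp only [himg X hXU, himg Y hYU] at h
    obtain ⟨x, hx⟩ := hφ.nonempty hX
    have hx' : (⟨x, hsub X hX hXU hx⟩ : hφ.mapSubgroup hU) ∈ Subtype.val ⁻¹' φ Y := by
      rw [← h]; exact hx
    rw [hφ.eq_of_mem hX hY hx hx']
  · rw [hAU]
    rintro _ ⟨Y, hY, hYU, rfl⟩
    obtain ⟨X, hX, rfl⟩ := hφ.bijOn.surjOn hY
    obtain ⟨h, hh⟩ := hφ.nonempty hX
    obtain ⟨g, hg⟩ := A.nonempty_mem X hX
    have hXU : X ⊆ U := IsASet.subset hU hX hg ((hφ.mem_mapSubgroup hU hX hg hh).1 (hYU hh))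
    exact ⟨_, ⟨X, hX, hXU, rfl⟩, by simp only [himg X hXU]⟩
  · rw [hAU]
    rintro _ ⟨X, hX, hXU, rfl⟩ _ ⟨Y, hY, hYU, rfl⟩ _ ⟨Z, hZ, hZU, rfl⟩ z hz z' hz'
    simp only [himg X hXU, himg Y hYU, himg Z hZU] at hz' ⊢
    rw [structConst_preimage_val U hXU hYU,
      structConst_preimage_val _ (hsub X hX hXU) (hsub Y hY hYU)]
    exact hφ.structConst_eq X hX Y hY Z hZ _ hz _ hz'

/-- The map induced by `φ` on the basic sets of the quotient sends `X/L` to `φ(X)/φ(L)`. -/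
lemma IsAlgIso.quot_apply (hφ : IsAlgIso A B φ) {L : Subgroup G} (hL : IsASubgroup A L)
    {X : Set G} (hX : X ∈ A.parts) :
    (QuotientGroup.mk : H → H ⧸ hφ.mapSubgroup hL) '' (extSet A φ (satSet L X)) =
      (QuotientGroup.mk : H → H ⧸ hφ.mapSubgroup hL) '' (φ X) := by
  rw [hφ.ext_sat hL hX, Set.image_preimage_eq _ QuotientGroup.mk_surjective]

/-- The algebraic isomorphism induced on quotients. -/
lemma IsAlgIso.quot (hφ : IsAlgIso A B φ) {L : Subgroup G} (hL : IsASubgroup A L)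
    {AQ : SRing (G ⧸ L)} (hAQ : IsQuotientSRing A L AQ) :
    IsAlgIso AQ (quotSRing B (hφ.mapSubgroup hL) (hφ.isASubgroup_map hL))
      (fun Y => (QuotientGroup.mk : H → H ⧸ hφ.mapSubgroup hL) ''
        extSet A φ ((QuotientGroup.mk : G → G ⧸ L) ⁻¹' Y)) := by
  refine ⟨⟨?_, ?_, ?_⟩, ?_⟩
  · rw [hAQ]
    rintro _ ⟨X, hX, rfl⟩
    exact ⟨φ X, hφ.bijOn.mapsTo hX, hφ.quot_apply hL hX⟩
  · rw [hAQ]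
    rintro _ ⟨X, hX, rfl⟩ _ ⟨Y, hY, rfl⟩ h
    simp only [hφ.quot_apply hL hX, hφ.quot_apply hL hY] at h
    obtain ⟨y, hy⟩ := hφ.nonempty hY
    obtain ⟨g, hg⟩ := A.nonempty_mem Y hY
    have h1 : y ∈ satSet (hφ.mapSubgroup hL) (φ X) := by
      change _ ∈ _ '' _
      rw [h]
      exact ⟨y, hy, rfl⟩
    rw [← hφ.ext_sat hL hX, hφ.mem_ext_iff (isASet_sat hL hX) hY hg hy] at h1
    exact image_mk_eq hL hX hY h1 ⟨g, hg, rfl⟩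
  · rw [hAQ]
    rintro _ ⟨Y, hY, rfl⟩
    obtain ⟨X, hX, rfl⟩ := hφ.bijOn.surjOn hY
    exact ⟨_, ⟨X, hX, rfl⟩, hφ.quot_apply hL hX⟩
  · rw [hAQ]
    rintro _ ⟨X, hX, rfl⟩ _ ⟨Y, hY, rfl⟩ _ ⟨Z, hZ, rfl⟩ z hz z' hz'
    simp only [hφ.quot_apply hL hX, hφ.quot_apply hL hY, hφ.quot_apply hL hZ] at hz' ⊢
    obtain ⟨z, hz, rfl⟩ := hz
    obtain ⟨z', hz', rfl⟩ := hz'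
    have h := hφ.structConst_ext (isASet_sat hL hX) (isASet_sat hL hY) hZ hz hz'
    rw [hφ.ext_sat hL hX, hφ.ext_sat hL hY, structConst_preimage_mk, structConst_preimage_mk] at h
    have hc : Nat.card (hφ.mapSubgroup hL) = Nat.card L := hφ.card_ext hL
    rw [hc] at h
    exact Nat.eq_of_mul_eq_mul_left Nat.card_pos h

end Sections

/-! ### Independence of the universe of the target group -/

section Transfer

universe u v w

lemma structConst_image {H : Type v} {K : Type w} [Group H] [Group K] (e : H ≃* K)
    (X Y : Set H) (z : H) : structConst (e '' X) (e '' Y) (e z) = structConst X Y z := by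
  symm
  refine Nat.card_congr (Equiv.subtypeEquiv (e.toEquiv.prodCongr e.toEquiv) ?_)
  rintro ⟨a, b⟩
  simp [← map_mul]

/-- Transport of an S-ring along a group isomorphism. -/
def mapSRing {H : Type v} {K : Type w} [Group H] [Finite H] [Group K] [Finite K] (e : H ≃* K)
    (B : SRing H) : SRing K where
  parts := (fun X => e '' X) '' B.parts
  nonempty_mem := by
    rintro _ ⟨X, hX, rfl⟩
    exact (B.nonempty_mem X hX).image _
  exists_mem := by
    intro k
    obtain ⟨X, hX, hm⟩ := B.exists_mem (e.symm k)
    exact ⟨_, ⟨X, hX, rfl⟩, _, hm, by simp⟩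
  eq_of_mem := by
    rintro _ ⟨X, hX, rfl⟩ _ ⟨Y, hY, rfl⟩ k ⟨x, hx, rfl⟩ ⟨y, hy, hxy⟩
    obtain rfl := e.injective hxy
    rw [B.eq_of_mem X hX Y hY y hx hy]
  one_mem := ⟨{1}, B.one_mem, by simp⟩
  inv_mem := by
    rintro _ ⟨X, hX, rfl⟩
    exact ⟨X⁻¹, B.inv_mem X hX, Set.image_inv e X⟩
  structConst_const := by
    rintro _ ⟨X, hX, rfl⟩ _ ⟨Y, hY, rfl⟩ _ ⟨Z, hZ, rfl⟩ _ ⟨z, hz, rfl⟩ _ ⟨z', hz', rfl⟩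
    simp only [structConst_image]
    exact B.structConst_const X hX Y hY Z hZ z hz z' hz'

/-- Every finite group has a copy in every universe, so the universe in which the target groups
of separability live is irrelevant. -/
lemma SepAbelian.transfer {G : Type u} [Group G] [Finite G] {A : SRing G}
    (h : SepAbelian.{u, v} A) : SepAbelian.{u, w} A := by
  intro H _ _ B φ hφ
  have : Small.{v} H := Countable.toSmall H
  have : Finite (Shrink.{v} H) := Finite.of_equiv H (equivShrink H)
  let e : H ≃* Shrink.{v} H := Shrink.mulEquiv.symm
  obtain ⟨f, hf, hf'⟩ := h (Shrink.{v} H) (mapSRing e B) (fun X => e '' φ X) (by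
    refine ⟨⟨?_, ?_, ?_⟩, ?_⟩
    · intro X hX
      exact ⟨φ X, hφ.bijOn.mapsTo hX, rfl⟩
    · intro X hX Y hY hXY
      exact hφ.bijOn.injOn hX hY (e.injective.image_injective hXY)
    · rintro _ ⟨Y, hY, rfl⟩
      obtain ⟨X, hX, rfl⟩ := hφ.bijOn.surjOn hY
      exact ⟨X, hX, rfl⟩
    · rintro X hX Y hY Z hZ z hz _ ⟨z', hz', rfl⟩
      rw [structConst_image]
      exact hφ.structConst_eq X hX Y hY Z hZ z hz z' hz')
  refine ⟨e.symm ∘ f, e.symm.bijective.comp hf, fun X hX => ?_⟩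
  rw [mapRel_comp, hf' X hX]
  ext ⟨a, b⟩
  constructor
  · rintro ⟨⟨c, d⟩, ⟨_, ⟨x, hx, rfl⟩, hd⟩, h2⟩
    simp only [Prod.mk.injEq] at hd h2
    obtain ⟨rfl, rfl⟩ := h2
    exact ⟨x, hx, by simp [hd]⟩
  · rintro ⟨x, hx, hb⟩
    exact ⟨(e a, e b), ⟨e x, ⟨x, hx, rfl⟩, by simp only at hb; simp [hb]⟩, by simp⟩

end Transfer

/-! ### Lifting automorphisms of a section -/

section Lift

variable {G : Type*} [CommGroup G] [Finite G]

lemma le_autSubgroup_of_parts_eq {A : SRing G} {K : Subgroup (Equiv.Perm G)}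
    (hK : ∀ g : G, Equiv.mulRight g ∈ K)
    (hA : A.parts = {X : Set G | ∃ g : G, X = {h : G | ∃ f ∈ K, f 1 = 1 ∧ f g = h}}) :
    K ≤ autSubgroup A := by
  intro f hf
  refine mem_autSubgroup fun X hX a b hab => ?_
  rw [hA] at hX
  obtain ⟨g, rfl⟩ := hX
  obtain ⟨k, hk, hk1, hkg⟩ := hab
  refine ⟨Equiv.mulRight (f a)⁻¹ * f * Equiv.mulRight a * k,
    K.mul_mem (K.mul_mem (K.mul_mem (hK _) hf) (hK _)) hk, ?_, ?_⟩
  · simp [hk1]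
  · simp [hkg]

/-- The permutations of `G/N` induced by automorphisms of `A`. -/
def liftable (A : SRing G) (N : Subgroup G) : Subgroup (Equiv.Perm (G ⧸ N)) where
  carrier := {σ | ∃ α ∈ autSubgroup A, ∀ u : G, ((α u : G) : G ⧸ N) = σ (u : G ⧸ N)}
  one_mem' := ⟨1, one_mem _, fun u => rfl⟩
  mul_mem' := by
    rintro σ τ ⟨α, hα, h1⟩ ⟨β, hβ, h2⟩
    exact ⟨α * β, mul_mem hα hβ, fun u => by simp [h1, h2]⟩
  inv_mem' := by
    rintro σ ⟨α, hα, h1⟩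
    refine ⟨α⁻¹, inv_mem hα, fun u => ?_⟩
    rw [Equiv.Perm.eq_inv_iff_eq, ← h1]
    simp

/-- If `A` is schurian then `Aut(A)^{G/N}` and `Aut(A_{G/N})` are 2-equivalent. Hence, if the latter
group is 2-isolated, then every automorphism of the quotient lifts. -/
lemma exists_lift {A : SRing G} {N : Subgroup G} (hN : IsASubgroup A N) (hA : IsSchurian A)
    {AQ : SRing (G ⧸ N)} (hAQ : IsQuotientSRing A N AQ) (hiso : TwoIsolated (autSubgroup AQ))
    {σ : Equiv.Perm (G ⧸ N)} (hσ : σ ∈ autSubgroup AQ) :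
    ∃ α ∈ autSubgroup A, ∀ u : G, ((α u : G) : G ⧸ N) = σ (u : G ⧸ N) := by
  obtain ⟨K, hK, hparts⟩ := hA
  have hKA := le_autSubgroup_of_parts_eq hK hparts
  -- Any pair in `G/N` whose quotient lies in `X/N` lifts to a pair in `G` with quotient in `X`
  have lift : ∀ X : Set G, ∀ a b : G ⧸ N, b * a⁻¹ ∈ (QuotientGroup.mk : G → G ⧸ N) '' X →
      ∃ x y : G, (x : G ⧸ N) = a ∧ (y : G ⧸ N) = b ∧ y * x⁻¹ ∈ X := by
    rintro X a b ⟨t, ht, hab⟩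
    obtain ⟨x, rfl⟩ := QuotientGroup.mk_surjective a
    refine ⟨x, t * x, rfl, ?_, by simpa using ht⟩
    rw [QuotientGroup.mk_mul, hab, inv_mul_cancel_right]
  have hle : liftable A N ≤ autSubgroup AQ := by
    rintro τ ⟨α, hα, h1⟩
    refine mem_autSubgroup fun Y hY a b hab => ?_
    rw [hAQ] at hY
    obtain ⟨X, hX, rfl⟩ := hY
    obtain ⟨x, y, rfl, rfl, hxy⟩ := lift X a b hab
    rw [← h1, ← h1]
    exact ⟨_, mem_of_mem_autSubgroup hα hX hxy, rfl⟩
  have horb : ∀ p, orb2 (autSubgroup AQ) p = orb2 (liftable A N) p := by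
    rintro ⟨a, b⟩
    apply subset_antisymm
    · rintro _ ⟨τ, hτ, rfl⟩
      obtain ⟨Y, hY, hab⟩ := AQ.exists_mem (b * a⁻¹)
      have hab' := mem_of_mem_autSubgroup hτ hY hab
      have hY' := hY
      rw [hAQ] at hY'
      obtain ⟨X, hX, rfl⟩ := hY'
      obtain ⟨x, y, rfl, rfl, hxy⟩ := lift X a b hab
      obtain ⟨x', y', hx', hy', hxy'⟩ := lift X _ _ hab'
      have hX' := hX
      rw [hparts] at hX'
      obtain ⟨g, rfl⟩ := hX'
      obtain ⟨k, hk, hk1, hkg⟩ := hxy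
      obtain ⟨k', hk', hk1', hkg'⟩ := hxy'
      have hk1i : k.symm 1 = 1 := by rw [Equiv.symm_apply_eq, hk1]
      have hkgi : k.symm (y * x⁻¹) = g := by rw [Equiv.symm_apply_eq, hkg]
      let α : Equiv.Perm G := Equiv.mulRight x' * k' * k⁻¹ * Equiv.mulRight x⁻¹
      have hα : α ∈ autSubgroup A :=
        hKA (K.mul_mem (K.mul_mem (K.mul_mem (hK _) hk') (K.inv_mem hk)) (hK _))
      have hαx : α x = x' := by simp [α, hk1i, hk1']
      have hαy : α y = y' := by simp [α, hkgi, hkg']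
      have hresp : ∀ u v : G, (u : G ⧸ N) = v → ((α u : G) : G ⧸ N) = α v := by
        intro u v huv
        rw [QuotientGroup.eq, mul_comm] at huv ⊢
        obtain ⟨Z, hZ, hm⟩ := A.exists_mem (v * u⁻¹)
        exact IsASet.subset hN hZ hm huv (mem_of_mem_autSubgroup hα hZ hm)
      let s : G ⧸ N → G ⧸ N := fun t => ((α t.out : G) : G ⧸ N)
      have hs : ∀ u : G, s (u : G ⧸ N) = α u := fun u => hresp _ _ (QuotientGroup.out_eq' _)
      have hsb : Function.Bijective s := by
        refine Finite.surjective_iff_bijective.1 fun t => ?_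
        obtain ⟨t, rfl⟩ := QuotientGroup.mk_surjective t
        exact ⟨((α.symm t : G) : G ⧸ N), by rw [hs]; simp⟩
      refine ⟨Equiv.ofBijective s hsb, ⟨α, hα, fun u => (hs u).symm⟩, ?_⟩
      simp only [Equiv.ofBijective_apply, hs, hαx, hαy, hx', hy']
    · rintro _ ⟨τ, hτ, rfl⟩
      exact ⟨τ, hle hτ, rfl⟩
  have := hiso (liftable A N) (by simp only [TwoEquiv, horb])
  rw [← this] at hσ
  exact hσ

end Lift

/-! ### Gluing -/

section Glue

variable {G H : Type*} [CommGroup G] [Finite G] [CommGroup H] [Finite H]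
  {A : SRing G} {B : SRing H} {φ : Set G → Set H}

/-- If `X` is a union of `L`-cosets, then `φ X` is a union of `φ(L)`-cosets. -/
lemma IsAlgIso.satSet_eq (hφ : IsAlgIso A B φ) {L : Subgroup G} (hL : IsASubgroup A L)
    {X : Set G} (hX : X ∈ A.parts) (hrad : (L : Set G) ⊆ radSet X) :
    satSet (hφ.mapSubgroup hL) (φ X) = φ X := by
  have h1 : satSet L X = X := by
    ext z
    rw [mem_satSet]
    constructor
    · rintro ⟨x, hx, hxz⟩
      rw [← (hrad hxz).2]
      exact ⟨x, hx, by simp⟩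
    · intro hz
      exact ⟨z, hz, by simp⟩
  rw [← hφ.ext_sat hL hX, h1, extSet_part hX]

/-- On each coset `U g`, the isomorphism `fQ` of quotients lifts to an isomorphism `k` inducing `φ` on
the restriction to `U`: two isomorphisms inducing the same algebraic isomorphism of the section
differ by an automorphism of the section, and those lift to automorphisms of `A_U`. -/
lemma IsAlgIso.exists_local (hφ : IsAlgIso A B φ) {U L : Subgroup G} (hU : IsASubgroup A U)
    (hL : IsASubgroup A L) (hLU : L ≤ U)
    {AU : SRing ↥U} (hAU : IsRestriction A U AU)
    {AS : SRing (↥U ⧸ L.subgroupOf U)} (hAS : IsQuotientSRing AU (L.subgroupOf U) AS)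
    (hschur : IsSchurian AU) (hisol : TwoIsolated (autSubgroup AS))
    {fU : U → hφ.mapSubgroup hU} (hfU : Function.Bijective fU)
    (hfU' : ∀ X ∈ A.parts, ∀ a b : U, (b : G) * (a : G)⁻¹ ∈ X → (fU b : H) * (fU a : H)⁻¹ ∈ φ X)
    {fQ : G ⧸ L → H ⧸ hφ.mapSubgroup hL}
    (hfQ' : ∀ X ∈ A.parts, ∀ a b : G ⧸ L, b * a⁻¹ ∈ (QuotientGroup.mk : G → G ⧸ L) '' X →
      fQ b * (fQ a)⁻¹ ∈ (QuotientGroup.mk : H → H ⧸ hφ.mapSubgroup hL) '' (φ X))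
    (g : G) :
    ∃ k : U → H, Function.Injective k ∧
      (∀ X ∈ A.parts, ∀ a b : U, (b : G) * (a : G)⁻¹ ∈ X → k b * (k a)⁻¹ ∈ φ X) ∧
      ∀ u : U, ((k u : H) : H ⧸ hφ.mapSubgroup hL) * fQ (g : G ⧸ L) =
        fQ (((u : G) * g : G) : G ⧸ L) := by
  have hLU' : hφ.mapSubgroup hL ≤ hφ.mapSubgroup hU := by
    rintro h ⟨X, hX, hXL, hh⟩
    exact ⟨X, hX, hXL.trans hLU, hh⟩
  -- Representatives in `φ(U)` of the translated restriction of `fQ` to `U/L`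
  have hq : ∀ u : U, ∃ q : hφ.mapSubgroup hU, ((q : H) : H ⧸ hφ.mapSubgroup hL) =
      fQ (((u : G) * g : G) : G ⧸ L) * (fQ (g : G ⧸ L))⁻¹ := by
    intro u
    obtain ⟨X, hX, hm⟩ := A.exists_mem u
    obtain ⟨h, hh, hh'⟩ := hfQ' X hX (g : G ⧸ L) (((u : G) * g : G) : G ⧸ L)
      ⟨u, hm, by simp⟩
    exact ⟨⟨h, (hφ.mem_mapSubgroup hU hX hm hh).2 u.2⟩, hh'⟩
  choose q hq using hq
  -- `τ` is `q` pulled back along `fU`; modulo `L` it is an automorphism of `A_{U/L}`.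
  choose τ hτ using fun u => hfU.2 (q u)
  have hτX : ∀ X ∈ A.parts, X ⊆ U → ∀ a b : U, (b : G) * (a : G)⁻¹ ∈ satSet L X →
      (τ b : G) * (τ a : G)⁻¹ ∈ satSet L X := by
    intro X hX hXU a b hab
    have h1 := hfQ' X hX (((a : G) * g : G) : G ⧸ L) (((b : G) * g : G) : G ⧸ L) (by
      have : (((b : G) * g : G) : G ⧸ L) * (((a : G) * g : G) : G ⧸ L)⁻¹ =
          (((b : G) * (a : G)⁻¹ : G) : G ⧸ L) := by
        rw [← QuotientGroup.mk_inv, ← QuotientGroup.mk_mul]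
        congr 1
        group
      rw [this]
      exact hab)
    have h2 : (((q b : H) * (q a : H)⁻¹ : H) : H ⧸ hφ.mapSubgroup hL) =
        fQ (((b : G) * g : G) : G ⧸ L) * (fQ (((a : G) * g : G) : G ⧸ L))⁻¹ := by
      rw [QuotientGroup.mk_mul, QuotientGroup.mk_inv, hq, hq]
      group
    rw [← h2] at h1
    obtain ⟨Y, hY, hm⟩ := A.exists_mem ((τ b : G) * (τ a : G)⁻¹)
    have h3 := hfU' Y hY _ _ hm
    rw [hτ, hτ] at h3
    have h4 : (q b : H) * (q a : H)⁻¹ ∈ satSet (hφ.mapSubgroup hL) (φ X) := h1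
    rw [← hφ.ext_sat hL hX] at h4
    exact (hφ.mem_ext_iff (isASet_sat hL hX) hY hm h3).1 h4
  have hsubL : ∀ X ∈ A.parts, ∀ x ∈ satSet L X, x ∈ L → X ⊆ L := by
    intro X hX x hx hxL
    obtain ⟨y, hy, hyx⟩ := mem_satSet.1 hx
    refine IsASet.subset hL hX hy ?_
    have := L.mul_mem hxL (L.inv_mem hyx)
    simpa using this
  have hself : ∀ X : Set G, X ⊆ satSet L X := fun X => Set.subset_preimage_image _ _
  have hmkU : ∀ a b : U, (a : U ⧸ L.subgroupOf U) = b ↔ (b : G) * (a : G)⁻¹ ∈ L := by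
    intro a b
    rw [QuotientGroup.eq, Subgroup.mem_subgroupOf, mul_comm]
    rfl
  have hτL : ∀ a b : U, ((a : U ⧸ L.subgroupOf U) = b) →
      ((τ a : U ⧸ L.subgroupOf U) = τ b) := by
    intro a b hab
    rw [hmkU] at hab ⊢
    obtain ⟨X, hX, hm⟩ := A.exists_mem ((b : G) * (a : G)⁻¹)
    have hXL : X ⊆ L := IsASet.subset hL hX hm hab
    obtain ⟨y, hy, hyx⟩ := mem_satSet.1 (hτX X hX (hXL.trans hLU) a b (hself X hm))
    simpa using L.mul_mem (hXL hy) hyx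
  have hτinj : ∀ a b : U, ((τ a : U ⧸ L.subgroupOf U) = τ b) →
      ((a : U ⧸ L.subgroupOf U) = b) := by
    intro a b hab
    rw [hmkU] at hab ⊢
    obtain ⟨X, hX, hm⟩ := A.exists_mem ((b : G) * (a : G)⁻¹)
    have hXU : X ⊆ U := IsASet.subset hU hX hm (U.mul_mem b.2 (U.inv_mem a.2))
    exact hsubL X hX _ (hτX X hX hXU a b (hself X hm)) hab hm
  let s : U ⧸ L.subgroupOf U → U ⧸ L.subgroupOf U := fun t => (τ t.out : U ⧸ L.subgroupOf U)
  have hs : ∀ u : U, s (u : U ⧸ L.subgroupOf U) = τ u := fun u =>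
    hτL _ _ (QuotientGroup.out_eq' _)
  have hsb : Function.Bijective s := by
    refine Finite.injective_iff_bijective.1 fun a b hab => ?_
    obtain ⟨a, rfl⟩ := QuotientGroup.mk_surjective a
    obtain ⟨b, rfl⟩ := QuotientGroup.mk_surjective b
    rw [hs, hs] at hab
    exact hτinj _ _ hab
  have hmemS : ∀ (X : Set G), X ⊆ U → ∀ a b : U,
      (b : U ⧸ L.subgroupOf U) * (a : U ⧸ L.subgroupOf U)⁻¹ ∈
        (QuotientGroup.mk : U → U ⧸ L.subgroupOf U) '' (Subtype.val ⁻¹' X) ↔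
      (b : G) * (a : G)⁻¹ ∈ satSet L X := by
    intro X hXU a b
    rw [← QuotientGroup.mk_inv, ← QuotientGroup.mk_mul, mem_satSet]
    constructor
    · rintro ⟨x, hx, hxe⟩
      rw [QuotientGroup.eq, Subgroup.mem_subgroupOf] at hxe
      exact ⟨x, hx, hxe⟩
    · rintro ⟨x, hx, hxe⟩
      refine ⟨⟨x, hXU hx⟩, hx, ?_⟩
      rw [QuotientGroup.eq, Subgroup.mem_subgroupOf]
      exact hxe
  have hσ : Equiv.ofBijective s hsb ∈ autSubgroup AS := by
    refine mem_autSubgroup fun Y hY a b hab => ?_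
    rw [hAS] at hY
    obtain ⟨X', hX', rfl⟩ := hY
    rw [hAU] at hX'
    obtain ⟨X, hX, hXU, rfl⟩ := hX'
    obtain ⟨a, rfl⟩ := QuotientGroup.mk_surjective a
    obtain ⟨b, rfl⟩ := QuotientGroup.mk_surjective b
    rw [Equiv.ofBijective_apply, Equiv.ofBijective_apply, hs, hs]
    rw [hmemS X hXU] at hab ⊢
    exact hτX X hX hXU a b hab
  have hN : IsASubgroup AU (L.subgroupOf U) := by
    intro Y hY
    rw [hAU] at hY
    obtain ⟨X, hX, hXU, rfl⟩ := hY
    rcases hL X hX with h | h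
    · exact Or.inl fun x hx => h hx
    · exact Or.inr (Set.disjoint_left.2 fun x hx hx' => Set.disjoint_left.1 h hx hx')
  obtain ⟨α, hα, hαs⟩ := exists_lift hN hschur hAS hisol hσ
  refine ⟨fun u => fU (α u), ?_, ?_, ?_⟩
  · exact Subtype.val_injective.comp (hfU.1.comp α.injective)
  · intro X hX a b hab
    have hXU : X ⊆ U := IsASet.subset hU hX hab (U.mul_mem b.2 (U.inv_mem a.2))
    have hXp : (Subtype.val ⁻¹' X : Set U) ∈ AU.parts := by
      rw [hAU]
      exact ⟨X, hX, hXU, rfl⟩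
    exact hfU' X hX _ _ (mem_of_mem_autSubgroup hα hXp (a := a) (b := b) hab)
  · intro u
    have h1 := hαs u
    rw [Equiv.ofBijective_apply, hs, eq_comm, hmkU] at h1
    obtain ⟨X, hX, hm⟩ := A.exists_mem ((α u : G) * (τ u : G)⁻¹)
    have h2 := hfU' X hX _ _ hm
    rw [hτ] at h2
    have h3 : (fU (α u) : H) * (q u : H)⁻¹ ∈ hφ.mapSubgroup hL :=
      (hφ.mem_mapSubgroup hL hX hm h2).2 h1
    have h4 : ((fU (α u) : H) : H ⧸ hφ.mapSubgroup hL) = (q u : H) := by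
      rw [eq_comm, QuotientGroup.eq, mul_comm]
      exact h3
    rw [h4, hq, inv_mul_cancel_right]

end Glue

end SRingPaper

open SRingPaper in
/-- if `A` is the `S`-wreath product over a finite abelian group `G`
for an `A`-section `S = U/L`, the S-rings `A_U` and `A_{G/L}` are separable
w.r.t. finite abelian groups, `A_U` is schurian, and `Aut(A_S)` is 2-isolated,
then `A` is separable w.r.t. finite abelian groups. -/
theorem swreath_separable_of_two_isolated
    (G : Type*) [CommGroup G] [Finite G] (A : SRing G) (U L : Subgroup G)
    (hwr : IsSWreath A U L)
    (AU : SRing ↥U) (hAU : IsRestriction A U AU)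
    (AQ : SRing (G ⧸ L)) (hAQ : IsQuotientSRing A L AQ)
    (AS : SRing (↥U ⧸ L.subgroupOf U)) (hAS : IsQuotientSRing AU (L.subgroupOf U) AS)
    (hsepU : SepAbelian AU) (hsepQ : SepAbelian AQ)
    (hschur : IsSchurian AU)
    (hisol : TwoIsolated (autSubgroup AS)) :
    SepAbelian A := by
  obtain ⟨hU, hL, hLU, -, hrad⟩ := hwr
  intro H _ _ B φ hφ
  obtain ⟨fU, hfU⟩ := hsepU.transfer _ _ _ (hφ.restr hU hAU)
  obtain ⟨fQ, hfQ⟩ := hsepQ.transfer _ _ _ (hφ.quot hL hAQ)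
  have hfU' : ∀ X ∈ A.parts, ∀ a b : U, (b : G) * (a : G)⁻¹ ∈ X →
      (fU b : H) * (fU a : H)⁻¹ ∈ φ X := by
    intro X hX a b hab
    have hXU : X ⊆ U := IsASet.subset hU hX hab (U.mul_mem b.2 (U.inv_mem a.2))
    have hXp : (Subtype.val ⁻¹' X : Set U) ∈ AU.parts := by
      rw [hAU]
      exact ⟨X, hX, hXU, rfl⟩
    have h := InducedBy.mem hfU hXp (a := a) (b := b) hab
    have himg : Subtype.val '' (Subtype.val ⁻¹' X : Set U) = X :=
      Set.image_preimage_eq_of_subset (by simpa using hXU)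
    simp only [himg] at h
    exact h
  have hfQ' : ∀ X ∈ A.parts, ∀ a b : G ⧸ L, b * a⁻¹ ∈ (QuotientGroup.mk : G → G ⧸ L) '' X →
      fQ b * (fQ a)⁻¹ ∈ (QuotientGroup.mk : H → H ⧸ hφ.mapSubgroup hL) '' (φ X) := by
    intro X hX a b hab
    have hXp : (QuotientGroup.mk : G → G ⧸ L) '' X ∈ AQ.parts := by
      rw [hAQ]
      exact ⟨X, hX, rfl⟩
    rw [← hφ.quot_apply hL hX]
    exact InducedBy.mem hfQ hXp hab
  choose k hkinj hkX hkQ using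
    hφ.exists_local hU hL hLU hAU hAS hschur hisol hfU.1 hfU' hfQ'
  have hcard : Nat.card G = Nat.card H := hφ.card_eq
  -- `r x` is the chosen representative of the coset `U x`.
  let r : G → G := fun x => ((x : G ⧸ U)).out
  have hr : ∀ x, x * (r x)⁻¹ ∈ U := by
    intro x
    rw [mul_comm, ← QuotientGroup.eq]
    exact QuotientGroup.out_eq' _
  have hr' : ∀ x y, y * x⁻¹ ∈ U → r x = r y := by
    intro x y hxy
    have : (x : G ⧸ U) = y := by rwa [QuotientGroup.eq, mul_comm]
    simp only [r, this]
  -- On `U g` the map `f` is the local lift `k g`, translated; modulo `L` it equals `fQ`.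
  let f : G → H := fun x => k (r x) ⟨x * (r x)⁻¹, hr x⟩ * (fQ (r x : G ⧸ L)).out
  have hfmk : ∀ x, ((f x : H) : H ⧸ hφ.mapSubgroup hL) = fQ (x : G ⧸ L) := by
    intro x
    simp only [f]
    rw [QuotientGroup.mk_mul, QuotientGroup.out_eq', hkQ, inv_mul_cancel_right]
  have hinj : Function.Injective f := by
    intro x y hxy
    have h1 : (x : G ⧸ L) = y := hfQ.1.1 (by rw [← hfmk, ← hfmk, hxy])
    rw [QuotientGroup.eq, mul_comm] at h1
    have h2 := hr' x y (hLU h1)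
    simp only [f, h2] at hxy
    have h3 := hkinj _ (mul_right_cancel hxy)
    simpa using h3
  have hbij : Function.Bijective f := hinj.bijective_of_nat_card_le hcard.ge
  refine ⟨f, hφ.inducedBy hbij fun X hX a b hab => ?_⟩
  by_cases hXU : X ⊆ U
  · have h2 := hr' a b (hXU hab)
    have h3 := hkX (r b) X hX ⟨a * (r b)⁻¹, h2 ▸ hr a⟩ ⟨b * (r b)⁻¹, hr b⟩
      (by simpa using hab)
    simp only [f, h2]
    simpa [mul_inv_rev, mul_assoc] using h3
  · have h1 := hfQ' X hX (a : G ⧸ L) (b : G ⧸ L) ⟨_, hab, rfl⟩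
    rw [← hfmk, ← hfmk] at h1
    have h2 : f b * (f a)⁻¹ ∈ satSet (hφ.mapSubgroup hL) (φ X) := h1
    rwa [hφ.satSet_eq hL hX (hrad X hX hXU)] at h2
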